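/- (Ordering reversal under a trace-preserving completely positive map) Let 0 < p < 1, let |Φ⁺⟩ = (|00⟩ + |11⟩)/√2 and |χ₀⟩ = (1/√(2−p))|00⟩ + √((1−p)/(2−p))|11⟩. Then F*(|Φ⁺⟩⟨Φ⁺|) ≥ F*(|χ₀⟩⟨χ₀|), yet after both states undergo the same local interaction I⊗Λ_p, the ordering is reversed: F*(ρ(χ₀, Λ_p)) > F*(ρ(Φ⁺, Λ_p)). -/

import Mathlib

open Matrix Complex
open scoped Kronecker ComplexOrder

/-- Index type for two qubits: the product basis of ℂ² ⊗ ℂ². -/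
abbrev Q2 := Fin 2 × Fin 2

/-- Kraus operator `M₀` of the amplitude damping channel. -/
noncomputable def M0 (p : ℝ) : Matrix (Fin 2) (Fin 2) ℂ :=
  !![1, 0; 0, (Real.sqrt (1 - p) : ℂ)]

/-- Kraus operator `M₁` of the amplitude damping channel. -/
noncomputable def M1 (p : ℝ) : Matrix (Fin 2) (Fin 2) ℂ :=
  !![0, (Real.sqrt p : ℂ); 0, 0]

/-- Outer product `|ψ⟩⟨ψ|` of a two-qubit vector. -/
noncomputable def outer (ψ : Q2 → ℂ) : Matrix Q2 Q2 ℂ :=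
  Matrix.of fun i j => ψ i * star (ψ j)

/-- The state `ρ(χ, Λ_p)` obtained by applying the amplitude damping channel
with parameter `p` to the second qubit: `Σᵢ (I ⊗ Mᵢ) ρ (I ⊗ Mᵢ)†`. -/
noncomputable def ampDamp (p : ℝ) (ρ : Matrix Q2 Q2 ℂ) : Matrix Q2 Q2 ℂ :=
  ((1 : Matrix (Fin 2) (Fin 2) ℂ) ⊗ₖ M0 p) * ρ * ((1 : Matrix (Fin 2) (Fin 2) ℂ) ⊗ₖ M0 p)ᴴ +
  ((1 : Matrix (Fin 2) (Fin 2) ℂ) ⊗ₖ M1 p) * ρ * ((1 : Matrix (Fin 2) (Fin 2) ℂ) ⊗ₖ M1 p)ᴴ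

/-- The pure state `|χ⟩ = a|00⟩ + b|11⟩`. -/
noncomputable def ketChi (a b : ℝ) : Q2 → ℂ :=
  fun ij => if ij = ((0 : Fin 2), (0 : Fin 2)) then (a : ℂ)
    else if ij = ((1 : Fin 2), (1 : Fin 2)) then (b : ℂ) else 0

/-- The maximally entangled state `|Φ⁺⟩ = (|00⟩ + |11⟩)/√2`. -/
noncomputable def phiPlus : Q2 → ℂ := ketChi (Real.sqrt 2)⁻¹ (Real.sqrt 2)⁻¹

/-- The optimal transmitted state `|χ₀⟩ = (1/√(2−p))|00⟩ + √((1−p)/(2−p))|11⟩`. -/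
noncomputable def ketChi0 (p : ℝ) : Q2 → ℂ :=
  ketChi (Real.sqrt (1 / (2 - p))) (Real.sqrt ((1 - p) / (2 - p)))

/-- Reduced density matrix on the first qubit (trace out the second qubit). -/
noncomputable def trSecond (ρ : Matrix Q2 Q2 ℂ) : Matrix (Fin 2) (Fin 2) ℂ :=
  Matrix.of fun i k => ∑ j : Fin 2, ρ (i, j) (k, j)

/-- Reduced density matrix on the second qubit (trace out the first qubit). -/
noncomputable def trFirst (ρ : Matrix Q2 Q2 ℂ) : Matrix (Fin 2) (Fin 2) ℂ :=
  Matrix.of fun j l => ∑ i : Fin 2, ρ (i, j) (i, l)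

/-- A unit vector `ψ ∈ ℂ²⊗ℂ²` is maximally entangled if both reduced density
matrices of `|ψ⟩⟨ψ|` equal `I/2`. -/
def MaxEnt (ψ : Q2 → ℂ) : Prop :=
  (∑ ij : Q2, Complex.normSq (ψ ij)) = 1 ∧
  trSecond (outer ψ) = (1 / 2 : ℂ) • (1 : Matrix (Fin 2) (Fin 2) ℂ) ∧
  trFirst (outer ψ) = (1 / 2 : ℂ) • (1 : Matrix (Fin 2) (Fin 2) ℂ)

/-- The real expectation value `⟨ψ|ρ|ψ⟩`. -/
noncomputable def expectation (ψ : Q2 → ℂ) (ρ : Matrix Q2 Q2 ℂ) : ℝ :=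
  (∑ i : Q2, ∑ j : Q2, star (ψ i) * ρ i j * ψ j).re

/-- Fidelity (fully entangled fraction): `F(ρ) = sup_Ψ ⟨Ψ|ρ|Ψ⟩` over maximally
entangled unit vectors `Ψ`. -/
noncomputable def Fid (ρ : Matrix Q2 Q2 ℂ) : ℝ :=
  sSup {x : ℝ | ∃ ψ : Q2 → ℂ, MaxEnt ψ ∧ x = expectation ψ ρ}

/-- Partial transposition on the second qubit: `(ρ^Γ)_{(i,j),(k,l)} = ρ_{(i,l),(k,j)}`. -/
def ptrans (ρ : Matrix Q2 Q2 ℂ) : Matrix Q2 Q2 ℂ :=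
  Matrix.of fun ij kl => ρ (ij.1, kl.2) (kl.1, ij.2)

/-- The Verstraete–Verschelde maximum achievable fidelity under trace-preserving LOCC,
as the value of the semidefinite program
`F*(ρ) = sup { 1/2 − Tr(X ρ^Γ) : X Hermitian, 0 ≤ X ≤ I, −I/2 ≤ X^Γ ≤ I/2 }`. -/
noncomputable def FStar (ρ : Matrix Q2 Q2 ℂ) : ℝ :=
  sSup {x : ℝ | ∃ X : Matrix Q2 Q2 ℂ,
    X.IsHermitian ∧ X.PosSemidef ∧ ((1 : Matrix Q2 Q2 ℂ) - X).PosSemidef ∧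
    (ptrans X + (1 / 2 : ℂ) • (1 : Matrix Q2 Q2 ℂ)).PosSemidef ∧
    ((1 / 2 : ℂ) • (1 : Matrix Q2 Q2 ℂ) - ptrans X).PosSemidef ∧
    x = 1 / 2 - ((X * ptrans ρ).trace).re}

/-- The Pauli matrix `σ_y`. -/
noncomputable def sigY : Matrix (Fin 2) (Fin 2) ℂ := !![0, -Complex.I; Complex.I, 0]

/-- The matrix `ρ (σ_y⊗σ_y) ρ̄ (σ_y⊗σ_y)` whose eigenvalues define the concurrence. -/
noncomputable def Rmat (ρ : Matrix Q2 Q2 ℂ) : Matrix Q2 Q2 ℂ :=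
  ρ * (sigY ⊗ₖ sigY) * ρ.map (starRingEnd ℂ) * (sigY ⊗ₖ sigY)

/-- `c` is the concurrence of `ρ`: `c = max(0, λ₁ − λ₂ − λ₃ − λ₄)` where
`λ₁ ≥ λ₂ ≥ λ₃ ≥ λ₄ ≥ 0` are the square roots of the eigenvalues (with multiplicity)
of `ρ (σ_y⊗σ_y) ρ̄ (σ_y⊗σ_y)`. -/
def IsConcurrence (ρ : Matrix Q2 Q2 ℂ) (c : ℝ) : Prop :=
  ∃ lam : Fin 4 → ℝ,
    (∀ i j : Fin 4, i ≤ j → lam j ≤ lam i) ∧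
    (∀ i : Fin 4, 0 ≤ lam i) ∧
    (Rmat ρ).charpoly = ∏ i : Fin 4, (Polynomial.X - Polynomial.C ((lam i : ℂ) ^ 2)) ∧
    c = max 0 (lam 0 - lam 1 - lam 2 - lam 3)

/-- `μ` is an eigenvalue of the matrix `A`. -/
def IsEigenvalue (A : Matrix Q2 Q2 ℂ) (μ : ℂ) : Prop :=
  ∃ v : Q2 → ℂ, v ≠ 0 ∧ A *ᵥ v = μ • v

/-!
Every state in sight is an X-shaped matrix whose partial transpose has diagonal `(a, 0, c, d)` and a
single real coherence `u`, between `|01⟩` and `|10⟩`. If `s` is the real part of the entry of a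
feasible `X` at that coherence, then 2 × 2 minors of the constraints give `|s| ≤ 1/2` and
`2 s² ≤ X₁₀,₁₀`, so `Tr(X ρ^Γ) ≥ 2 (c s² + u s)`; for each such `s` equality holds at a rank-one `X`
supported on `|01⟩, |10⟩`. The semidefinite program thus reduces to minimizing `c s² + u s` over
`|s| ≤ 1/2`, so that `F* = 1/2 + |u| - c/2` when `c ≤ |u|` and `F* = 1/2 + u²/(2c)` otherwise.
Hence `F* = 1` for `|Φ⁺⟩` and `F* = 1 - p/2` for the damped `|χ₀⟩`. The damped `|Φ⁺⟩` has
`u = √(1 - p)/2` and `c = p/2`, and stays strictly below `1 - p/2` because `√(1 - p) < 1 - p/2`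
in the first case and `p > 1/2` in the second.
-/

section

variable {n 𝕜 : Type*} [RCLike 𝕜] {A : Matrix n n 𝕜}

lemma normSq_apply_le_of_posSemidef (hA : A.PosSemidef) (i j : n) :
    RCLike.normSq (A i j) ≤ RCLike.re (A i i) * RCLike.re (A j j) := by
  have hdet := (hA.submatrix ![i, j]).det_nonneg
  have hji : A j i = star (A i j) := (hA.isHermitian.apply j i).symm
  have him : RCLike.im (A i i) = 0 := (RCLike.nonneg_iff.mp hA.diag_nonneg).2
  have hre := (RCLike.nonneg_iff.mp hdet).1
  rw [det_fin_two] at hre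
  simpa [hji, him, RCLike.mul_conj, RCLike.normSq_eq_def'] using hre

lemma re_apply_sq_le_of_posSemidef (hA : A.PosSemidef) (i j : n) :
    RCLike.re (A i j) ^ 2 ≤ RCLike.re (A i i) * RCLike.re (A j j) := by
  refine le_trans ?_ (normSq_apply_le_of_posSemidef hA i j)
  rw [RCLike.normSq_apply, sq]
  exact le_add_of_nonneg_right (mul_self_nonneg _)

end

lemma binary_quadratic_form_nonneg {R : Type*} [CommRing R] [LinearOrder R] [IsStrictOrderedRing R]
    {a b c : R} (ha : 0 ≤ a) (hc : 0 ≤ c) (h : b ^ 2 ≤ a * c) (x y : R) :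
    0 ≤ a * x ^ 2 + 2 * b * x * y + c * y ^ 2 := by
  have hsq : (2 * b * x * y) ^ 2 ≤ (a * x ^ 2 + c * y ^ 2) ^ 2 := by
    calc (2 * b * x * y) ^ 2 = 4 * b ^ 2 * (x * y) ^ 2 := by ring
      _ ≤ 4 * (a * c) * (x * y) ^ 2 := by gcongr
      _ = (a * x ^ 2 + c * y ^ 2) ^ 2 - (a * x ^ 2 - c * y ^ 2) ^ 2 := by ring
      _ ≤ (a * x ^ 2 + c * y ^ 2) ^ 2 := sub_le_self _ (sq_nonneg _)
  linarith [(abs_le_of_sq_le_sq' hsq (by positivity)).1]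

/-- The real two-qubit "X matrix": `a, b, c, d` are the diagonal entries at
`|00⟩, |01⟩, |10⟩, |11⟩`, `u` is the coherence between `|00⟩` and `|11⟩`, and `v` the one
between `|01⟩` and `|10⟩`. Pure states in Schmidt form, their damped versions and the optimizers of
the semidefinite program all have this shape. -/
noncomputable def xMatrix (a b c d u v : ℝ) : Matrix Q2 Q2 ℂ :=
  Matrix.of fun
    | (0, 0), (0, 0) => a
    | (0, 1), (0, 1) => b
    | (1, 0), (1, 0) => c
    | (1, 1), (1, 1) => d
    | (0, 0), (1, 1) | (1, 1), (0, 0) => u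
    | (0, 1), (1, 0) | (1, 0), (0, 1) => v
    | _, _ => 0

section

variable {a b c d u v : ℝ}

lemma ptrans_xMatrix : ptrans (xMatrix a b c d u v) = xMatrix a b c d v u := by
  ext ⟨i, j⟩ ⟨k, l⟩
  fin_cases i <;> fin_cases j <;> fin_cases k <;> fin_cases l <;> rfl

lemma smul_one_add_xMatrix (r : ℝ) :
    (r : ℂ) • (1 : Matrix Q2 Q2 ℂ) + xMatrix a b c d u v =
      xMatrix (r + a) (r + b) (r + c) (r + d) u v := by
  ext ⟨i, j⟩ ⟨k, l⟩
  fin_cases i <;> fin_cases j <;> fin_cases k <;> fin_cases l <;> simp [xMatrix]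

lemma neg_xMatrix : -xMatrix a b c d u v = xMatrix (-a) (-b) (-c) (-d) (-u) (-v) := by
  ext ⟨i, j⟩ ⟨k, l⟩
  fin_cases i <;> fin_cases j <;> fin_cases k <;> fin_cases l <;> simp [xMatrix]

lemma smul_one_sub_xMatrix (r : ℝ) :
    (r : ℂ) • (1 : Matrix Q2 Q2 ℂ) - xMatrix a b c d u v =
      xMatrix (r - a) (r - b) (r - c) (r - d) (-u) (-v) := by
  simp only [sub_eq_add_neg, neg_xMatrix, smul_one_add_xMatrix]

lemma re_trace_mul_xMatrix (X : Matrix Q2 Q2 ℂ) :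
    ((X * xMatrix a b c d u v).trace).re =
      a * (X (0, 0) (0, 0)).re + b * (X (0, 1) (0, 1)).re +
      c * (X (1, 0) (1, 0)).re + d * (X (1, 1) (1, 1)).re +
      u * ((X (0, 0) (1, 1)).re + (X (1, 1) (0, 0)).re) +
      v * ((X (0, 1) (1, 0)).re + (X (1, 0) (0, 1)).re) := by
  simp [Matrix.trace, Matrix.mul_apply, Fintype.sum_prod_type, xMatrix]
  ring

lemma isHermitian_xMatrix : (xMatrix a b c d u v).IsHermitian := by
  ext ⟨i, j⟩ ⟨k, l⟩
  fin_cases i <;> fin_cases j <;> fin_cases k <;> fin_cases l <;> simp [xMatrix]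

lemma star_dotProduct_xMatrix_mulVec (x : Q2 → ℂ) :
    star x ⬝ᵥ xMatrix a b c d u v *ᵥ x =
      (((a * (x (0, 0)).re ^ 2 + 2 * u * (x (0, 0)).re * (x (1, 1)).re + d * (x (1, 1)).re ^ 2) +
        (a * (x (0, 0)).im ^ 2 + 2 * u * (x (0, 0)).im * (x (1, 1)).im + d * (x (1, 1)).im ^ 2) +
        (b * (x (0, 1)).re ^ 2 + 2 * v * (x (0, 1)).re * (x (1, 0)).re + c * (x (1, 0)).re ^ 2) +
        (b * (x (0, 1)).im ^ 2 + 2 * v * (x (0, 1)).im * (x (1, 0)).im + c * (x (1, 0)).im ^ 2) :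
          ℝ) : ℂ) := by
  apply Complex.ext <;>
    simp [dotProduct, mulVec, Fintype.sum_prod_type, xMatrix, -ofReal_add, -ofReal_mul,
      -ofReal_pow] <;>
    ring

lemma posSemidef_xMatrix (ha : 0 ≤ a) (hb : 0 ≤ b) (hc : 0 ≤ c) (hd : 0 ≤ d)
    (hu : u ^ 2 ≤ a * d) (hv : v ^ 2 ≤ b * c) : (xMatrix a b c d u v).PosSemidef := by
  refine .of_dotProduct_mulVec_nonneg isHermitian_xMatrix fun x => ?_
  rw [star_dotProduct_xMatrix_mulVec, zero_le_real]
  have houter := binary_quadratic_form_nonneg ha hd hu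
  have hinner := binary_quadratic_form_nonneg hb hc hv
  exact add_nonneg (add_nonneg (add_nonneg (houter _ _) (houter _ _)) (hinner _ _)) (hinner _ _)

end

/-- Feasibility for the semidefinite program defining `FStar`; Hermiticity of `X` is part of
`posSemidef`. -/
structure SDPFeasible (X : Matrix Q2 Q2 ℂ) : Prop where
  posSemidef : X.PosSemidef
  one_sub_posSemidef : ((1 : Matrix Q2 Q2 ℂ) - X).PosSemidef
  ptrans_add_half_posSemidef : (ptrans X + (1 / 2 : ℂ) • (1 : Matrix Q2 Q2 ℂ)).PosSemidef
  half_sub_ptrans_posSemidef : ((1 / 2 : ℂ) • (1 : Matrix Q2 Q2 ℂ) - ptrans X).PosSemidef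

lemma fStar_eq_of_forall_le {ρ X₀ : Matrix Q2 Q2 ℂ} (hX₀ : SDPFeasible X₀)
    (hmin : ∀ X, SDPFeasible X → ((X₀ * ptrans ρ).trace).re ≤ ((X * ptrans ρ).trace).re) :
    FStar ρ = 1 / 2 - ((X₀ * ptrans ρ).trace).re := by
  refine IsGreatest.csSup_eq ⟨⟨X₀, hX₀.posSemidef.isHermitian, hX₀.posSemidef,
    hX₀.one_sub_posSemidef, hX₀.ptrans_add_half_posSemidef, hX₀.half_sub_ptrans_posSemidef,
    rfl⟩, ?_⟩
  rintro _ ⟨X, -, hX, hone_sub, hadd_half, hhalf_sub, rfl⟩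
  exact sub_le_sub_left (hmin X ⟨hX, hone_sub, hadd_half, hhalf_sub⟩) _

namespace SDPFeasible

variable {X : Matrix Q2 Q2 ℂ}

lemma re_apply_swap (hX : SDPFeasible X) (i j : Q2) : (X j i).re = (X i j).re := by
  rw [← hX.posSemidef.isHermitian.apply j i, star_def, conj_re]

lemma re_apply_self_nonneg (hX : SDPFeasible X) (i : Q2) : 0 ≤ (X i i).re :=
  (Complex.le_def.1 hX.posSemidef.diag_nonneg).1

lemma re_apply_self_le_half (hX : SDPFeasible X) (i : Q2) : (X i i).re ≤ 1 / 2 := by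
  have h := (Complex.le_def.1 (hX.half_sub_ptrans_posSemidef.diag_nonneg (i := i))).1
  simpa [ptrans] using h

lemma two_mul_re_apply_sq_le (hX : SDPFeasible X) :
    2 * (X (0, 1) (1, 0)).re ^ 2 ≤ (X (1, 0) (1, 0)).re := by
  have hminor : (X (0, 1) (1, 0)).re ^ 2 ≤ (X (0, 1) (0, 1)).re * (X (1, 0) (1, 0)).re :=
    re_apply_sq_le_of_posSemidef hX.posSemidef _ _
  have hhalf := mul_le_mul_of_nonneg_right (hX.re_apply_self_le_half (0, 1))
    (hX.re_apply_self_nonneg (1, 0))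
  linarith

lemma abs_re_apply_le_half (hX : SDPFeasible X) : |(X (0, 1) (1, 0)).re| ≤ 1 / 2 := by
  -- Partial transposition moves the coherence `X (0, 1) (1, 0)` to the position `(0, 0), (1, 1)`.
  have hminor := re_apply_sq_le_of_posSemidef hX.half_sub_ptrans_posSemidef (0, 0) (1, 1)
  refine abs_le_of_sq_le_sq ?_ one_half_pos.le
  calc (X (0, 1) (1, 0)).re ^ 2
      ≤ (1 / 2 - (X (0, 0) (0, 0)).re) * (1 / 2 - (X (1, 1) (1, 1)).re) := by
        simpa [ptrans] using hminor
    _ ≤ 1 / 2 * (1 / 2) :=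
        mul_le_mul (sub_le_self _ (hX.re_apply_self_nonneg _))
          (sub_le_self _ (hX.re_apply_self_nonneg _))
          (sub_nonneg.2 (hX.re_apply_self_le_half _)) one_half_pos.le
    _ = (1 / 2) ^ 2 := (sq _).symm

end SDPFeasible

lemma sdpFeasible_xMatrix {s : ℝ} (hs : |s| ≤ 1 / 2) :
    SDPFeasible (xMatrix 0 (1 / 2) (2 * s ^ 2) 0 0 s) := by
  have hs_sq : s ^ 2 ≤ (1 / 2) ^ 2 := sq_le_sq' (abs_le.1 hs).1 (abs_le.1 hs).2
  have hone : (1 : Matrix Q2 Q2 ℂ) = ((1 : ℝ) : ℂ) • 1 := by simp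
  have hhalf : (1 / 2 : ℂ) = ((1 / 2 : ℝ) : ℂ) := by simp
  constructor
  · apply posSemidef_xMatrix <;> linarith [sq_nonneg s]
  · rw [hone, smul_one_sub_xMatrix]
    apply posSemidef_xMatrix <;> linarith [sq_nonneg s]
  · rw [hhalf, ptrans_xMatrix, add_comm, smul_one_add_xMatrix]
    apply posSemidef_xMatrix <;> linarith [sq_nonneg s]
  · rw [hhalf, ptrans_xMatrix, smul_one_sub_xMatrix]
    apply posSemidef_xMatrix <;> linarith [sq_nonneg s]

section

variable {a c d u : ℝ}

theorem fStar_xMatrix_of_isMinOn (ha : 0 ≤ a) (hc : 0 ≤ c) (hd : 0 ≤ d) {s₀ : ℝ}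
    (hs₀ : s₀ ∈ Set.Icc (-(1 / 2)) (1 / 2))
    (hmin : IsMinOn (fun s => c * s ^ 2 + u * s) (Set.Icc (-(1 / 2)) (1 / 2)) s₀) :
    FStar (xMatrix a 0 c d u 0) = 1 / 2 - 2 * (c * s₀ ^ 2 + u * s₀) := by
  have hval : ((xMatrix 0 (1 / 2) (2 * s₀ ^ 2) 0 0 s₀ *
      ptrans (xMatrix a 0 c d u 0)).trace).re = 2 * (c * s₀ ^ 2 + u * s₀) := by
    rw [ptrans_xMatrix, re_trace_mul_xMatrix]
    simp [xMatrix, -ofReal_pow, -ofReal_mul]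
    ring
  rw [← hval]
  refine fStar_eq_of_forall_le (sdpFeasible_xMatrix (abs_le.2 hs₀)) fun X hX => ?_
  rw [hval, ptrans_xMatrix, re_trace_mul_xMatrix, hX.re_apply_swap (0, 1) (1, 0)]
  have hmin_X := isMinOn_iff.1 hmin _ (abs_le.1 hX.abs_re_apply_le_half)
  have h00 := mul_nonneg ha (hX.re_apply_self_nonneg (0, 0))
  have h11 := mul_nonneg hd (hX.re_apply_self_nonneg (1, 1))
  have h10 := mul_le_mul_of_nonneg_left hX.two_mul_re_apply_sq_le hc
  linarith

theorem fStar_xMatrix_of_le_abs (ha : 0 ≤ a) (hc : 0 ≤ c) (hd : 0 ≤ d) (hcu : c ≤ |u|) :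
    FStar (xMatrix a 0 c d u 0) = 1 / 2 + |u| - c / 2 := by
  obtain ⟨s₀, hs₀, hs₀_sq, hus₀⟩ :
      ∃ s₀ ∈ Set.Icc (-(1 / 2) : ℝ) (1 / 2), s₀ ^ 2 = 1 / 4 ∧ u * s₀ = -|u| / 2 := by
    rcases le_total 0 u with hu | hu
    · exact ⟨-(1 / 2), by norm_num, by norm_num, by rw [abs_of_nonneg hu]; ring⟩
    · exact ⟨1 / 2, by norm_num, by norm_num, by rw [abs_of_nonpos hu]; ring⟩
  rw [fStar_xMatrix_of_isMinOn ha hc hd hs₀, hs₀_sq, hus₀]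
  · ring
  · refine isMinOn_iff.2 fun s hs => ?_
    have hs_abs : |s| ≤ 1 / 2 := abs_le.2 hs
    rw [hs₀_sq, hus₀, ← sq_abs s]
    have hus : -(|u| * |s|) ≤ u * s := by rw [← abs_mul]; exact neg_abs_le _
    have hslope : c * (1 / 2 + |s|) ≤ |u| :=
      (mul_le_of_le_one_right hc (by linarith)).trans hcu
    have hgap := mul_le_mul_of_nonneg_right hslope (sub_nonneg.2 hs_abs)
    linarith

theorem fStar_xMatrix_of_abs_le (ha : 0 ≤ a) (hc : 0 < c) (hd : 0 ≤ d) (huc : |u| ≤ c) :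
    FStar (xMatrix a 0 c d u 0) = 1 / 2 + u ^ 2 / (2 * c) := by
  have hs₀ : -u / (2 * c) ∈ Set.Icc (-(1 / 2)) (1 / 2) := by
    rw [Set.mem_Icc, ← abs_le, abs_div, abs_neg, abs_of_pos (by positivity : 0 < 2 * c),
      div_le_div_iff₀ (by positivity) two_pos]
    linarith
  rw [fStar_xMatrix_of_isMinOn ha hc.le hd hs₀]
  · field_simp
    ring
  · refine isMinOn_iff.2 fun s _ => sub_nonneg.1 ?_
    calc 0 ≤ c * (s + u / (2 * c)) ^ 2 := by positivity
      _ = c * s ^ 2 + u * s - (c * (-u / (2 * c)) ^ 2 + u * (-u / (2 * c))) := by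
        field_simp
        ring

end

lemma ampDamp_outer_ketChi (a b : ℝ) {p : ℝ} (hp0 : 0 ≤ p) (hp1 : p ≤ 1) :
    ampDamp p (outer (ketChi a b)) =
      xMatrix (a ^ 2) 0 (p * b ^ 2) ((1 - p) * b ^ 2) (a * b * √(1 - p)) 0 := by
  have hp_sqrt : (√p : ℂ) ^ 2 = p := by exact_mod_cast Real.sq_sqrt hp0
  have hq_sqrt : (√(1 - p) : ℂ) ^ 2 = 1 - p := by exact_mod_cast Real.sq_sqrt (sub_nonneg.2 hp1)
  ext ⟨i, j⟩ ⟨k, l⟩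
  fin_cases i <;> fin_cases j <;> fin_cases k <;> fin_cases l <;>
    simp [xMatrix, ampDamp, outer, ketChi, M0, M1, Matrix.mul_apply, Fintype.sum_prod_type,
      Matrix.one_apply] <;>
    grind

lemma ampDamp_zero (ρ : Matrix Q2 Q2 ℂ) : ampDamp 0 ρ = ρ := by
  have hM0 : M0 0 = 1 := by simp [M0, one_fin_two]
  have hM1 : M1 0 = 0 := by ext i j; fin_cases i <;> fin_cases j <;> simp [M1]
  simp [ampDamp, hM0, hM1]

theorem fStar_outer_ketChi (a b : ℝ) : FStar (outer (ketChi a b)) = 1 / 2 + |a * b| := by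
  rw [← ampDamp_zero (outer _), ampDamp_outer_ketChi a b le_rfl zero_le_one, zero_mul, sub_zero,
    one_mul, Real.sqrt_one, mul_one,
    fStar_xMatrix_of_le_abs (sq_nonneg a) le_rfl (sq_nonneg b) (abs_nonneg _), zero_div, sub_zero]

theorem fStar_outer_ketChi_le_one {a b : ℝ} (hab : a ^ 2 + b ^ 2 = 1) :
    FStar (outer (ketChi a b)) ≤ 1 := by
  have hamgm : |a * b| ≤ 1 / 2 := abs_le.2
    ⟨by linarith [sq_nonneg (a + b)], by linarith [sq_nonneg (a - b)]⟩
  linarith [fStar_outer_ketChi a b]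

theorem fStar_outer_phiPlus : FStar (outer phiPlus) = 1 := by
  rw [phiPlus, fStar_outer_ketChi, abs_mul_self, ← mul_inv, Real.mul_self_sqrt zero_le_two]
  norm_num

theorem fStar_outer_ketChi0_le_one {p : ℝ} (hp1 : p ≤ 1) : FStar (outer (ketChi0 p)) ≤ 1 := by
  have hq : 0 < 2 - p := by linarith
  apply fStar_outer_ketChi_le_one
  rw [Real.sq_sqrt (by positivity), Real.sq_sqrt (div_nonneg (sub_nonneg.2 hp1) hq.le)]
  field_simp
  ring

theorem fStar_ampDamp_ketChi0 {p : ℝ} (hp0 : 0 ≤ p) (hp1 : p ≤ 1) :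
    FStar (ampDamp p (outer (ketChi0 p))) = 1 - p / 2 := by
  have hq : 0 < 2 - p := by linarith
  have hr : 0 ≤ 1 - p := sub_nonneg.2 hp1
  have hb : 0 ≤ (1 - p) / (2 - p) := div_nonneg hr hq.le
  have hcoherence : √(1 / (2 - p)) * √((1 - p) / (2 - p)) * √(1 - p) = (1 - p) / (2 - p) := by
    rw [Real.sqrt_div hr, Real.sqrt_div zero_le_one, Real.sqrt_one]
    field_simp
    rw [Real.sq_sqrt hr, Real.sq_sqrt hq.le]
  rw [ketChi0, ampDamp_outer_ketChi _ _ hp0 hp1, hcoherence, Real.sq_sqrt hb,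
    fStar_xMatrix_of_le_abs (sq_nonneg _) (mul_nonneg hp0 hb) (mul_nonneg hr hb), abs_of_nonneg hb]
  · field_simp
    ring
  · rw [abs_of_nonneg hb]
    exact mul_le_of_le_one_left hb hp1

theorem fStar_ampDamp_phiPlus_lt {p : ℝ} (hp0 : 0 < p) (hp1 : p < 1) :
    FStar (ampDamp p (outer phiPlus)) < 1 - p / 2 := by
  have hhalf : (√2)⁻¹ * (√2)⁻¹ = (1 / 2 : ℝ) := by
    rw [← mul_inv, Real.mul_self_sqrt zero_le_two, one_div]
  have hs : 0 ≤ √(1 - p) := Real.sqrt_nonneg _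
  have hs_sq : √(1 - p) ^ 2 = 1 - p := Real.sq_sqrt (sub_nonneg.2 hp1.le)
  have hu : |1 / 2 * √(1 - p)| = √(1 - p) / 2 := by rw [abs_of_nonneg (by positivity)]; ring
  have hd : 0 ≤ (1 - p) * (1 / 2) := by linarith
  rw [phiPlus, ampDamp_outer_ketChi _ _ hp0.le hp1.le, sq, hhalf]
  rcases le_total p √(1 - p) with hle | hle
  · rw [fStar_xMatrix_of_le_abs (by positivity) (by positivity) hd (by linarith), hu]
    have hamgm : √(1 - p) < 1 - p / 2 :=
      (Real.sqrt_lt' (by linarith)).2 (by linarith [pow_pos hp0 2])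
    linarith
  · rw [fStar_xMatrix_of_abs_le (by positivity) (by positivity) hd (by linarith), mul_pow, hs_sq]
    have hsq_le : 1 - p ≤ p ^ 2 := hs_sq ▸ pow_le_pow_left₀ hs hle 2
    have hp_half : 1 < 2 * p := by linarith [mul_pos hp0 (sub_pos.2 hp1)]
    have hgap : (1 / 2) ^ 2 * (1 - p) / (2 * (p * (1 / 2))) < (1 - p) / 2 := by
      rw [div_lt_iff₀ (by positivity)]
      linarith [mul_pos (sub_pos.2 hp1) (sub_pos.2 hp_half)]
    linarith

/-- Ordering reversal: For `0 < p < 1`, before the interaction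
`F*(|Φ⁺⟩⟨Φ⁺|) ≥ F*(|χ₀⟩⟨χ₀|)`, yet after both states undergo the same local
interaction `I ⊗ Λ_p` the ordering of the entanglement monotone `F*` is reversed:
`F*(ρ(χ₀, Λ_p)) > F*(ρ(Φ⁺, Λ_p))`. -/
theorem ordering_reversal (p : ℝ) (hp0 : 0 < p) (hp1 : p < 1) :
    FStar (outer (ketChi0 p)) ≤ FStar (outer phiPlus) ∧
    FStar (ampDamp p (outer phiPlus)) < FStar (ampDamp p (outer (ketChi0 p))) := by
  rw [fStar_outer_phiPlus, fStar_ampDamp_ketChi0 hp0.le hp1.le]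
  exact ⟨fStar_outer_ketChi0_le_one hp1.le, fStar_ampDamp_phiPlus_lt hp0 hp1⟩
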